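/- The hyperelliptic Rauzy–Veech group G_d, generated by the operators L_p, equals the group of all B ∈ SL(ℤ^{A_d}) satisfying B Ω B^T = Ω whose mod-2 reduction preserves the set E = {ē*} ∪ {ē_p : p ∈ A_d}. -/

import Mathlib

open Matrix

/-- The antisymmetric matrix `Ω` with `Ω p q = sign (q - p)`. -/
def Omega (d : ℕ) : Matrix (Fin d) (Fin d) ℤ :=
  Matrix.of fun p q => if p < q then 1 else if q < p then -1 else 0

/-- The matrix of the operator `L_p`. -/
def L (d : ℕ) (p : Fin d) : Matrix (Fin d) (Fin d) ℤ :=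
  Matrix.of fun r q => if q = p then (if r < p then -1 else 1) else (if r = q then 1 else 0)

/-- The hyperelliptic Rauzy–Veech group `G_d`, generated by the operators `L_p`. -/
def Gd (d : ℕ) : Subgroup (Matrix (Fin d) (Fin d) ℤ)ˣ :=
  Subgroup.closure {u : (Matrix (Fin d) (Fin d) ℤ)ˣ |
    ∃ p : Fin d, (u : Matrix (Fin d) (Fin d) ℤ) = L d p}

/-- The set `E = {ē*} ∪ {ē_p : p ∈ A_d}` in `(ℤ/2)^{A_d}`. -/
def Eset (d : ℕ) : Set (Fin d → ZMod 2) :=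
  insert (fun _ => 1) (Set.range fun p : Fin d => Pi.single p (1 : ZMod 2))

/-!
On row vectors, right multiplication by `L_p` is the symplectic transvection `T_p` along `e_p`, and
modulo two `L_p` acts on `E` as the transposition of `ē*` and `ē_p`. These transpositions generate
the symmetric group on `E`, so an isometry preserving `E` differs from an element of `G_d` by an
isometry congruent to the identity modulo two.

It remains to see that this level-two group is generated by the squares of the transvections along
the `e_i` and the `e_i - e_j`; they lie in `G_d`, because a power of `T_j` carries `e_i` to
`e_i - e_j`. The lantern relation yields the squares along `e_0 - e_1 + e_k`, hence every Eichler
transformation attached to the hyperbolic pair `p = e_0 - e_1`, `q = e_0`. A Euclidean descent on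
`|ω q u|` with these elements moves the image of `p`, and then that of `q`, back into place. What is
left acts on the orthogonal complement of the plane, which is isometric to `ℤ^(d-2)`, and one
concludes by induction.
-/

namespace RauzyVeech

section Groups

variable {R V : Type*} [CommRing R] [AddCommGroup V] [Module R V]

/-- The group of linear automorphisms preserving the bilinear form `ω`. -/
def isometryGroup (ω : V →ₗ[R] V →ₗ[R] R) : Subgroup (V ≃ₗ[R] V) where
  carrier := {φ | ∀ x y, ω (φ x) (φ y) = ω x y}
  one_mem' _ _ := rfl
  mul_mem' hφ hψ x y := (hφ _ _).trans (hψ x y)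
  inv_mem' {φ} hφ x y := by
    rw [← hφ, ← LinearEquiv.mul_apply, ← LinearEquiv.mul_apply, mul_inv_cancel]; rfl

lemma mem_isometryGroup {ω : V →ₗ[R] V →ₗ[R] R} {φ : V ≃ₗ[R] V} :
    φ ∈ isometryGroup ω ↔ ∀ x y, ω (φ x) (φ y) = ω x y := Iff.rfl

variable (R V) in
/-- The group of linear automorphisms of `V` congruent to the identity modulo `n`. -/
def congruenceSubgroup (n : R) : Subgroup (V ≃ₗ[R] V) where
  carrier := {φ | ∀ x, ∃ z, φ x = x + n • z}
  one_mem' x := ⟨0, by simp⟩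
  mul_mem' {φ ψ} hφ hψ x := by
    obtain ⟨z, hz⟩ := hψ x
    obtain ⟨w, hw⟩ := hφ (ψ x)
    exact ⟨z + w, by rw [LinearEquiv.mul_apply, hw, hz, smul_add, add_assoc]⟩
  inv_mem' {φ} hφ x := by
    obtain ⟨z, hz⟩ := hφ (φ⁻¹ x)
    rw [← LinearEquiv.mul_apply, mul_inv_cancel] at hz
    change x = _ at hz
    exact ⟨-z, by rw [smul_neg, ← sub_eq_add_neg, eq_sub_iff_add_eq, ← hz]⟩

end Groups

section Transvections

variable {R V : Type*} [CommRing R] [AddCommGroup V] [Module R V] {ω : V →ₗ[R] V →ₗ[R] R}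

/-- The `n`-th power `x ↦ x + n ω(v, x) v` of the symplectic transvection along `v`. -/
def symplecticTransvection (hω : ω.IsAlt) (v : V) (n : R) : V ≃ₗ[R] V :=
  LinearEquiv.transvection (f := n • ω v) (v := v) (by simp [hω v])

variable (hω : ω.IsAlt)

lemma symplecticTransvection_apply (v : V) (n : R) (x : V) :
    symplecticTransvection hω v n x = x + (n * ω v x) • v := by
  simp [symplecticTransvection, LinearMap.transvection.apply, mul_smul]

lemma symplecticTransvection_mul (v : V) (m n : R) :
    symplecticTransvection hω v m * symplecticTransvection hω v n =
      symplecticTransvection hω v (m + n) := by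
  ext x
  simp only [LinearEquiv.mul_apply, symplecticTransvection_apply, map_add, map_smul, hω v]
  module

lemma symplecticTransvection_zero_right (v : V) : symplecticTransvection hω v 0 = 1 := by
  ext x
  simp [symplecticTransvection_apply]

lemma symplecticTransvection_zero_left (n : R) : symplecticTransvection hω 0 n = 1 := by
  ext x
  simp [symplecticTransvection_apply]

lemma inv_symplecticTransvection (v : V) (n : R) :
    (symplecticTransvection hω v n)⁻¹ = symplecticTransvection hω v (-n) := by
  rw [inv_eq_iff_mul_eq_one, symplecticTransvection_mul, add_neg_cancel,
    symplecticTransvection_zero_right]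

lemma symplecticTransvection_zpow (v : V) (n : R) (k : ℤ) :
    symplecticTransvection hω v n ^ k = symplecticTransvection hω v (k • n) :=
  let powers : Multiplicative R →* (V ≃ₗ[R] V) :=
    { toFun m := symplecticTransvection hω v m.toAdd
      map_one' := symplecticTransvection_zero_right hω v
      map_mul' _ _ := (symplecticTransvection_mul hω v _ _).symm }
  (map_zpow powers (Multiplicative.ofAdd n) k).symm

lemma symplecticTransvection_mem_isometryGroup (v : V) (n : R) :
    symplecticTransvection hω v n ∈ isometryGroup ω := fun x y => by
  simp only [symplecticTransvection_apply, map_add, map_smul, LinearMap.add_apply,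
    LinearMap.smul_apply, smul_eq_mul, hω v, ← hω.neg x v]
  ring

lemma symplecticTransvection_mem_congruenceSubgroup (v : V) (n : R) :
    symplecticTransvection hω v n ∈ congruenceSubgroup R V n := fun x =>
  ⟨ω v x • v, by rw [symplecticTransvection_apply, mul_smul]⟩

lemma det_symplecticTransvection [Module.Free R V] [Module.Finite R V] (v : V) (n : R) :
    LinearEquiv.det (symplecticTransvection hω v n) = 1 :=
  LinearEquiv.transvection.det_eq_one _

lemma conj_symplecticTransvection {φ : V ≃ₗ[R] V} (hφ : φ ∈ isometryGroup ω) (v : V) (n : R) :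
    φ * symplecticTransvection hω v n * φ⁻¹ = symplecticTransvection hω (φ v) n := by
  rw [mul_inv_eq_iff_eq_mul]
  ext x
  simp only [LinearEquiv.mul_apply, symplecticTransvection_apply, map_add, map_smul,
    mem_isometryGroup.1 hφ]

lemma symplecticTransvection_lantern {a b c : V} (hab : ω a b = 1) (hac : ω a c = 1)
    (hbc : ω b c = 1) :
    symplecticTransvection hω (a - b + c) 2 =
      symplecticTransvection hω a 2 * symplecticTransvection hω (a - b) 2 *
        symplecticTransvection hω b 2 * symplecticTransvection hω (b - c) 2 *
        symplecticTransvection hω (a - c) 2 * symplecticTransvection hω c 2 := by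
  ext x
  simp only [LinearEquiv.mul_apply, symplecticTransvection_apply, map_add, map_sub, map_smul,
    LinearMap.add_apply, LinearMap.sub_apply, hω a, hω b, hω c, hab, hac, hbc, ← hω.neg a b,
    ← hω.neg a c]
  module

lemma symplecticTransvection_mul_mul_apply_neg {p q : V} (hpq : ω p q = 1) :
    (symplecticTransvection hω p 2 * symplecticTransvection hω (q - p) 2 *
      symplecticTransvection hω q 2) p = -p := by
  simp only [LinearEquiv.mul_apply, symplecticTransvection_apply, map_add, map_sub, map_smul,
    LinearMap.sub_apply, hω p, hω q, hpq, ← hω.neg p q]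
  module

/-- The Eichler transformation of `q` and `w`; for `w` orthogonal to `q` it is
`x ↦ x + n (ω(q, x) w + ω(w, x) q)`. -/
def eichler (hω : ω.IsAlt) (q w : V) (n : R) : V ≃ₗ[R] V :=
  symplecticTransvection hω (q + w) n * (symplecticTransvection hω q n)⁻¹ *
    (symplecticTransvection hω w n)⁻¹

lemma eichler_apply {q w : V} (h : ω q w = 0) (n : R) (x : V) :
    eichler hω q w n x = x + (n * ω q x) • w + (n * ω w x) • q := by
  simp only [eichler, LinearEquiv.mul_apply, inv_symplecticTransvection,
    symplecticTransvection_apply, map_add, map_smul, LinearMap.add_apply, hω q, hω w, h,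
    ← hω.neg q w]
  module

lemma eichler_add {q v w : V} (hv : ω q v = 0) (hw : ω q w = 0) (n : R) :
    eichler hω q (v + w) n =
      symplecticTransvection hω q (n * (-n * ω v w)) * eichler hω q v n * eichler hω q w n := by
  ext x
  have hvw : ω q (v + w) = 0 := by rw [map_add, hv, hw, add_zero]
  simp only [LinearEquiv.mul_apply, symplecticTransvection_apply, eichler_apply hω hv,
    eichler_apply hω hw, eichler_apply hω hvw, map_add, map_smul, LinearMap.add_apply,
    hω q, hv, hw, ← hω.neg q v]
  module

lemma eichler_zero (q : V) (n : R) : eichler hω q 0 n = 1 := by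
  ext x
  simp [eichler_apply hω (map_zero (ω q))]

lemma eichler_neg {q w : V} (h : ω q w = 0) (n : R) :
    eichler hω q (-w) n = (eichler hω q w n)⁻¹ := by
  have hneg : ω q (-w) = 0 := by rw [map_neg, h, neg_zero]
  rw [← mul_eq_one_iff_eq_inv]
  simpa [eichler_zero, symplecticTransvection_zero_right, hω w] using (eichler_add hω hneg h n).symm

lemma eichler_self (q : V) (n : R) :
    eichler hω q q n = symplecticTransvection hω q (n * 2) := by
  ext x
  rw [eichler_apply hω (hω q), symplecticTransvection_apply]
  module

/-- The vectors `w` orthogonal to `q` for which `N` contains the Eichler transformation of `q`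
and `w`. -/
def eichlerSubgroup (q : V) (n : R) (N : Subgroup (V ≃ₗ[R] V))
    (hN : ∀ m, symplecticTransvection hω q (n * m) ∈ N) : AddSubgroup V where
  carrier := {w | ω q w = 0 ∧ eichler hω q w n ∈ N}
  zero_mem' := ⟨map_zero _, by rw [eichler_zero]; exact N.one_mem⟩
  add_mem' := fun ⟨hv, hvN⟩ ⟨hw, hwN⟩ =>
    ⟨by rw [map_add, hv, hw, add_zero],
      by rw [eichler_add hω hv hw]; exact N.mul_mem (N.mul_mem (hN _) hvN) hwN⟩
  neg_mem' := fun ⟨hw, hwN⟩ =>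
    ⟨by rw [map_neg, hw, neg_zero], by rw [eichler_neg hω hw]; exact N.inv_mem hwN⟩

end Transvections

lemma exists_abs_add_two_mul_le (a : ℤ) {b : ℤ} (hb : b ≠ 0) : ∃ k, |a + 2 * k * b| ≤ |b| := by
  have hpos : 0 < 2 * b.natAbs := by omega
  obtain ⟨k, hk⟩ : 2 * b ∣ a.bmod (2 * b.natAbs) - a := by
    rw [← Int.natAbs_dvd, Int.natAbs_mul]
    exact Int.dvd_bmod_sub_self
  have hlower := Int.le_bmod (x := a) hpos
  have hupper := Int.bmod_le (x := a) hpos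
  refine ⟨k, ?_⟩
  rw [show a + 2 * k * b = a.bmod (2 * b.natAbs) by linarith, abs_le, Int.abs_eq_natAbs]
  push_cast at hlower hupper ⊢
  omega

section Descent

variable {V : Type*} [AddCommGroup V] {ω : V →ₗ[ℤ] V →ₗ[ℤ] ℤ} (hω : ω.IsAlt)
  {N : Subgroup (V ≃ₗ[ℤ] V)} {p q : V}

include hω in
lemma apply_swap_eq_neg_one (hpq : ω p q = 1) : ω q p = -1 := by
  rw [← hω.neg, hpq]

lemma symplecticTransvection_mul_mem {v : V} {n : ℤ} (hv : symplecticTransvection hω v n ∈ N)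
    (k : ℤ) : symplecticTransvection hω v (n * k) ∈ N := by
  rw [mul_comm, ← smul_eq_mul, ← symplecticTransvection_zpow]
  exact N.zpow_mem hv k

lemma eichler_self_add_mem {w : V} (hq : symplecticTransvection hω q 2 ∈ N)
    (hw : symplecticTransvection hω w 2 ∈ N) (hqw : symplecticTransvection hω (q + w) 2 ∈ N)
    (horth : ω q w = 0) : eichler hω q (q + w) 2 ∈ N := by
  rw [eichler_add hω (hω q) horth, eichler_self]
  have hpow := symplecticTransvection_mul_mem hω hq
  exact N.mul_mem (N.mul_mem (hpow _) (hpow _))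
    (N.mul_mem (N.mul_mem hqw (N.inv_mem hq)) (N.inv_mem hw))

lemma exists_abs_lt_of_not_dvd (hp : symplecticTransvection hω p 2 ∈ N)
    (hq : symplecticTransvection hω q 2 ∈ N) (hpq : ω p q = 1) {u : V} (hodd : Odd (ω q u))
    (heven : Even (ω p u)) (hdvd : ¬ ω q u ∣ ω p u) : ∃ g ∈ N, |ω q (g u)| < |ω q u| := by
  have hqp := apply_swap_eq_neg_one hω hpq
  obtain ⟨k, hk⟩ := exists_abs_add_two_mul_le (ω p u) (b := ω q u) (by rintro h; simp [h] at hodd)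
  set b := ω p u + 2 * k * ω q u with hb
  have hb_even : Even b := by
    rw [hb, mul_assoc]; exact heven.add (even_two_mul _)
  have hb_ne : b ≠ 0 := fun h => hdvd ⟨-(2 * k), by linarith⟩
  have hb_lt : |b| < |ω q u| := hk.lt_of_ne fun h =>
    Int.not_even_iff_odd.2 (odd_abs.2 hodd) (h ▸ even_abs.2 hb_even)
  obtain ⟨l, hl⟩ := exists_abs_add_two_mul_le (ω q u) hb_ne
  refine ⟨symplecticTransvection hω p (2 * -l) * symplecticTransvection hω q (2 * k),
    N.mul_mem (symplecticTransvection_mul_mem hω hp _) (symplecticTransvection_mul_mem hω hq _),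
    lt_of_eq_of_lt (congrArg _ ?_) (hl.trans_lt hb_lt)⟩
  simp only [LinearEquiv.mul_apply, symplecticTransvection_apply, map_add, map_smul, smul_eq_mul,
    hω q, hpq, hqp, hb]
  ring

/-- The hypothesis `hdvd` says that no Eichler transformation of `q` moves `u` to a vector to which
`exists_abs_lt_of_not_dvd` applies. -/
lemma isUnit_apply_of_forall_dvd (hpq : ω p q = 1) {u : V} (hodd : Odd (ω q u))
    (hprim : ∃ y, ω y u = 1) (hdvd : ∀ w, ω q w = 0 → ω q u ∣ ω p (eichler hω q w 2 u)) :
    IsUnit (ω q u) := by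
  have hqp := apply_swap_eq_neg_one hω hpq
  have hdvd_p : ω q u ∣ ω p u := by simpa [eichler_zero] using hdvd 0 (map_zero _)
  have hdvd_orth (w : V) (hw : ω q w = 0) : ω q u ∣ ω w u := by
    have h := hdvd w hw
    simp only [eichler_apply hω hw, map_add, map_smul, smul_eq_mul, hpq, mul_one] at h
    refine (Int.isCoprime_two_right.2 hodd).dvd_of_dvd_mul_left ((Int.dvd_add_right ?_).1 h)
    exact hdvd_p.add (Dvd.intro (2 * ω p w) (by ring))
  obtain ⟨y, hy⟩ := hprim
  have horth : ω q (y + ω q y • p) = 0 := by simp [hqp]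
  have h := dvd_sub (hdvd_orth _ horth) (hdvd_p.mul_left (ω q y))
  rw [map_add, map_smul, LinearMap.add_apply, LinearMap.smul_apply, smul_eq_mul,
    add_sub_cancel_right, hy] at h
  exact isUnit_of_dvd_one h

lemma even_apply_sub (f : V →ₗ[ℤ] ℤ) {φ : V ≃ₗ[ℤ] V} (hφ : φ ∈ congruenceSubgroup ℤ V 2)
    (x : V) : Even (f (φ x) - f x) := by
  obtain ⟨z, hz⟩ := hφ x
  exact ⟨f z, by rw [hz, map_add, map_smul, smul_eq_mul]; ring⟩

lemma exists_mem_isUnit_apply (hN : N ≤ isometryGroup ω ⊓ congruenceSubgroup ℤ V 2)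
    (hp : symplecticTransvection hω p 2 ∈ N) (hq : symplecticTransvection hω q 2 ∈ N)
    (heichler : ∀ w, ω q w = 0 → eichler hω q w 2 ∈ N) (hpq : ω p q = 1) (u : V)
    (hodd : Odd (ω q u)) (heven : Even (ω p u)) (hprim : ∃ y, ω y u = 1) :
    ∃ g ∈ N, IsUnit (ω q (g u)) := by
  induction hn : (ω q u).natAbs using Nat.strong_induction_on generalizing u with
  | _ n ih =>
    by_cases hdvd : ∀ w, ω q w = 0 → ω q u ∣ ω p (eichler hω q w 2 u)
    · exact ⟨1, N.one_mem, isUnit_apply_of_forall_dvd hω hpq hodd hprim hdvd⟩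
    push Not at hdvd
    obtain ⟨w, hw, hndvd⟩ := hdvd
    have hmove (g) (hg : g ∈ N) :
        Odd (ω q (g u)) ∧ Even (ω p (g u)) ∧ ∃ y, ω y (g u) = 1 := by
      obtain ⟨hiso, hcong⟩ := hN hg
      obtain ⟨y, hy⟩ := hprim
      exact ⟨by simpa using hodd.add_even (even_apply_sub (ω q) hcong u),
        by simpa using heven.add (even_apply_sub (ω p) hcong u), g y, (hiso y u).trans hy⟩
    have hfix : ω q (eichler hω q w 2 u) = ω q u := by simp [eichler_apply hω hw, hw, hω q]
    obtain ⟨hodd', heven', -⟩ := hmove _ (heichler w hw)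
    obtain ⟨g, hg, hlt⟩ := exists_abs_lt_of_not_dvd hω hp hq hpq hodd' heven' (hfix ▸ hndvd)
    obtain ⟨hodd', heven', hprim'⟩ := hmove _ (N.mul_mem hg (heichler w hw))
    rw [hfix, Int.abs_eq_natAbs, Int.abs_eq_natAbs, Nat.cast_lt, hn] at hlt
    obtain ⟨k, hk, hunit⟩ := ih _ hlt _ hodd' heven' hprim' rfl
    exact ⟨_, N.mul_mem hk (N.mul_mem hg (heichler w hw)), hunit⟩

lemma exists_mem_apply_eq_of_isUnit (hq : symplecticTransvection hω q 2 ∈ N)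
    (heichler : ∀ w, ω q w = 0 → eichler hω q w 2 ∈ N) {c z : V} (hunit : IsUnit (ω q c))
    (hz : ω q z = 0) : ∃ g ∈ N, g q = q ∧ g (c + (2 : ℤ) • z) = c := by
  have hsq : ω q c * ω q c = 1 := Int.isUnit_mul_self hunit
  have hw : ω q (-(ω q c) • z) = 0 := by simp [hz]
  set t := ω (-(ω q c) • z) (c + (2 : ℤ) • z) with ht
  have hclear : eichler hω q (-(ω q c) • z) 2 (c + (2 : ℤ) • z) = c + (2 * t) • q := by
    rw [eichler_apply hω hw, ← ht, map_add, map_smul, hz, smul_zero, add_zero, smul_smul,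
      show 2 * ω q c * -ω q c = -2 by linear_combination -2 * hsq]
    module
  refine ⟨symplecticTransvection hω q (2 * (-(ω q c) * t)) * eichler hω q (-(ω q c) • z) 2,
    N.mul_mem (symplecticTransvection_mul_mem hω hq _) (heichler _ hw), ?_, ?_⟩
  · rw [LinearEquiv.mul_apply, eichler_apply hω hw]
    simp [symplecticTransvection_apply, hω q, ← hω.neg q z, hz]
  · rw [LinearEquiv.mul_apply, hclear, symplecticTransvection_apply, map_add, map_smul, hω q,
      smul_zero, add_zero, add_assoc, ← add_smul,
      show 2 * t + 2 * (-(ω q c) * t) * ω q c = 0 by linear_combination (-2 * t) * hsq,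
      zero_smul, add_zero]

lemma exists_mem_apply_eq_self (hN : N ≤ isometryGroup ω ⊓ congruenceSubgroup ℤ V 2)
    (hp : symplecticTransvection hω p 2 ∈ N) (hq : symplecticTransvection hω q 2 ∈ N)
    (hsub : symplecticTransvection hω (q - p) 2 ∈ N)
    (heichler : ∀ w, ω q w = 0 → eichler hω q w 2 ∈ N) (hpq : ω p q = 1) {φ : V ≃ₗ[ℤ] V}
    (hφ : φ ∈ isometryGroup ω ⊓ congruenceSubgroup ℤ V 2) : ∃ g ∈ N, g (φ p) = p := by
  have hqp := apply_swap_eq_neg_one hω hpq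
  have hodd : Odd (ω q (φ p)) := by
    simpa using (show Odd (ω q p) by simp [hqp]).add_even (even_apply_sub (ω q) hφ.2 p)
  have heven : Even (ω p (φ p)) := by simpa [hω p] using even_apply_sub (ω p) hφ.2 p
  have hprim : ω (φ (-q)) (φ p) = 1 := by rw [hφ.1]; simp [hqp]
  obtain ⟨g, hg, hunit⟩ := exists_mem_isUnit_apply hω hN hp hq heichler hpq _ hodd heven ⟨_, hprim⟩
  obtain ⟨z, hz : g (φ p) = p + (2 : ℤ) • z⟩ := (mul_mem (hN hg) hφ).2 p
  have hval : ω q (g (φ p)) = -1 + 2 * ω q z := by simp [hz, hqp]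
  rcases Int.isUnit_iff.1 hunit with hone | hone
  · obtain ⟨k, hk, -, hkc⟩ := exists_mem_apply_eq_of_isUnit hω hq heichler (c := -p) (z := z + p)
      (by simp [hqp]) (by rw [map_add, hqp]; lia)
    refine ⟨_, N.mul_mem (N.mul_mem (N.mul_mem hp hsub) hq) (N.mul_mem hk hg), ?_⟩
    have hneg : k (g (φ p)) = -p := by rw [← hkc, hz]; congr 1; module
    rw [LinearEquiv.mul_apply, LinearEquiv.mul_apply k, hneg, map_neg,
      symplecticTransvection_mul_mul_apply_neg hω hpq, neg_neg]
  · obtain ⟨k, hk, -, hkc⟩ := exists_mem_apply_eq_of_isUnit hω hq heichler (c := p) (z := z)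
      (by simp [hqp]) (by lia)
    exact ⟨_, N.mul_mem hk hg, by rw [LinearEquiv.mul_apply, hz, hkc]⟩

lemma exists_mem_mul_apply_eq_self (hN : N ≤ isometryGroup ω ⊓ congruenceSubgroup ℤ V 2)
    (hp : symplecticTransvection hω p 2 ∈ N) (hq : symplecticTransvection hω q 2 ∈ N)
    (hsub : symplecticTransvection hω (q - p) 2 ∈ N)
    (heichlerp : ∀ w, ω p w = 0 → eichler hω p w 2 ∈ N)
    (heichlerq : ∀ w, ω q w = 0 → eichler hω q w 2 ∈ N) (hpq : ω p q = 1) {φ : V ≃ₗ[ℤ] V}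
    (hφ : φ ∈ isometryGroup ω ⊓ congruenceSubgroup ℤ V 2) :
    ∃ g ∈ N, (g * φ) p = p ∧ (g * φ) q = q := by
  obtain ⟨g, hg, hgp⟩ := exists_mem_apply_eq_self hω hN hp hq hsub heichlerq hpq hφ
  obtain ⟨hiso, hcong⟩ := mul_mem (hN hg) hφ
  obtain ⟨z, hz : g (φ q) = q + (2 : ℤ) • z⟩ := hcong q
  have hpz : ω p z = 0 := by
    have h : ω (g (φ p)) (g (φ q)) = ω p q := hiso p q
    rw [hgp, hz, map_add, map_smul, smul_eq_mul] at h
    lia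
  obtain ⟨k, hk, hkp, hkq⟩ := exists_mem_apply_eq_of_isUnit hω hp heichlerp (c := q) (z := z)
    (by simp [hpq]) hpz
  exact ⟨k * g, N.mul_mem hk hg, by simp only [LinearEquiv.mul_apply, hgp, hkp],
    by simp only [LinearEquiv.mul_apply, hz, hkq]⟩

end Descent

section LevelTwo

/-- The alternating form on `ℤ^d` with Gram matrix `Omega d`. -/
def form (d : ℕ) : (Fin d → ℤ) →ₗ[ℤ] (Fin d → ℤ) →ₗ[ℤ] ℤ :=
  Matrix.toLinearMap₂' ℤ (Omega d)

lemma form_apply (d : ℕ) (x y : Fin d → ℤ) : form d x y = x ⬝ᵥ Omega d *ᵥ y :=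
  Matrix.toLinearMap₂'_apply' _ _ _

lemma form_single_single {d : ℕ} (i j : Fin d) :
    form d (Pi.single i 1) (Pi.single j 1) = Omega d i j := by
  simp [form_apply]

lemma form_cons {d : ℕ} (a b : ℤ) (x y : Fin d → ℤ) :
    form (d + 1) (Fin.cons a x) (Fin.cons b y) =
      a * ∑ i, y i - b * ∑ i, x i + form d x y := by
  simp only [form_apply, dotProduct, mulVec, Fin.sum_univ_succ, Fin.cons_zero, Fin.cons_succ,
    Omega, of_apply, lt_self_iff_false, Fin.succ_pos, Fin.succ_lt_succ_iff, if_true, if_false,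
    Fin.not_lt_zero, mul_add, Finset.sum_add_distrib, Finset.mul_sum]
  simp only [zero_mul, mul_zero, one_mul, neg_mul, mul_neg, mul_comm b, Finset.sum_neg_distrib,
    zero_add]
  ring

lemma isAlt_form (d : ℕ) : (form d).IsAlt := by
  induction d with
  | zero => intro x; simp [form_apply]
  | succ d ih =>
    intro x
    rw [← Fin.cons_self_tail x, form_cons, ih, sub_self, zero_add]

/-- The vectors `e i` and `e i - e j` of `ℤ^d`. -/
def roots (d : ℕ) : Set (Fin d → ℤ) :=
  Set.range (fun i => Pi.single i 1) ∪
    Set.range fun ij : Fin d × Fin d => Pi.single ij.1 1 - Pi.single ij.2 1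

/-- The group generated by the squares of the transvections along `roots d`. -/
def rootSquareSubgroup (d : ℕ) : Subgroup ((Fin d → ℤ) ≃ₗ[ℤ] (Fin d → ℤ)) :=
  Subgroup.closure ((symplecticTransvection (isAlt_form d) · 2) '' roots d)

/-- The automorphisms of `form d` of determinant one that are congruent to the identity modulo
two. -/
noncomputable def levelTwoSubgroup (d : ℕ) : Subgroup ((Fin d → ℤ) ≃ₗ[ℤ] (Fin d → ℤ)) :=
  isometryGroup (form d) ⊓ LinearEquiv.det.ker ⊓ congruenceSubgroup ℤ (Fin d → ℤ) 2

lemma rootSquareSubgroup_le_levelTwoSubgroup (d : ℕ) :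
    rootSquareSubgroup d ≤ levelTwoSubgroup d :=
  (Subgroup.closure_le _).2 <| by
    rintro _ ⟨v, -, rfl⟩
    exact ⟨⟨symplecticTransvection_mem_isometryGroup _ v 2, det_symplecticTransvection _ v 2⟩,
      symplecticTransvection_mem_congruenceSubgroup _ v 2⟩

lemma transvection_single_mem {d : ℕ} (i : Fin d) :
    symplecticTransvection (isAlt_form d) (Pi.single i 1) 2 ∈ rootSquareSubgroup d :=
  Subgroup.subset_closure ⟨_, .inl ⟨i, rfl⟩, rfl⟩

lemma transvection_single_sub_single_mem {d : ℕ} (i j : Fin d) :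
    symplecticTransvection (isAlt_form d) (Pi.single i 1 - Pi.single j 1) 2 ∈
      rootSquareSubgroup d :=
  Subgroup.subset_closure ⟨_, .inr ⟨(i, j), rfl⟩, rfl⟩

lemma transvection_single_sub_add_single_mem {d : ℕ} {i j k : Fin d} (hij : i < j) (hjk : j < k) :
    symplecticTransvection (isAlt_form d) (Pi.single i 1 - Pi.single j 1 + Pi.single k 1) 2 ∈
      rootSquareSubgroup d := by
  have hform {a b : Fin d} (hab : a < b) : form d (Pi.single a 1) (Pi.single b 1) = 1 := by
    rw [form_single_single, Omega, of_apply, if_pos hab]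
  rw [symplecticTransvection_lantern _ (hform hij) (hform (hij.trans hjk)) (hform hjk)]
  have hsingle := transvection_single_mem (d := d)
  have hsub := transvection_single_sub_single_mem (d := d)
  exact mul_mem (mul_mem (mul_mem (mul_mem (mul_mem (hsingle i) (hsub i j)) (hsingle j))
    (hsub j k)) (hsub i k)) (hsingle k)

/-- The splitting of `ℤ^(d+2)` into the hyperbolic plane spanned by `e 0 - e 1` and `e 0` and its
orthogonal complement, a copy of `ℤ^d` with basis `e (i + 2) + e 0 - e 1`. -/
def hyperbolicSplitting (d : ℕ) : ((ℤ × ℤ) × (Fin d → ℤ)) ≃ₗ[ℤ] (Fin (d + 2) → ℤ) where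
  toFun w := Fin.cons (w.1.1 + w.1.2 + ∑ i, w.2 i) (Fin.cons (-w.1.1 - ∑ i, w.2 i) w.2)
  invFun v := ((-v 1 - ∑ i : Fin d, v i.succ.succ, v 0 + v 1), fun i => v i.succ.succ)
  map_add' v w := by
    ext i
    refine Fin.cases ?_ (Fin.cases ?_ fun i => ?_) i <;> simp [Finset.sum_add_distrib] <;> ring
  map_smul' n w := by
    ext i
    refine Fin.cases ?_ (Fin.cases ?_ fun i => ?_) i <;> simp [← Finset.mul_sum] <;> ring
  left_inv w := by
    have hone : (1 : Fin (d + 2)) = Fin.succ 0 := rfl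
    ext <;> simp only [hone, Fin.cons_zero, Fin.cons_succ] <;> ring
  right_inv v := by
    ext i
    refine Fin.cases ?_ (Fin.cases ?_ fun i => ?_) i
    · simp only [Fin.cons_zero]
      ring
    · simp
    · simp

lemma hyperbolicSplitting_apply {d : ℕ} (w : (ℤ × ℤ) × (Fin d → ℤ)) :
    hyperbolicSplitting d w =
      Fin.cons (w.1.1 + w.1.2 + ∑ i, w.2 i) (Fin.cons (-w.1.1 - ∑ i, w.2 i) w.2) := rfl

lemma form_hyperbolicSplitting {d : ℕ} (v w : (ℤ × ℤ) × (Fin d → ℤ)) :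
    form (d + 2) (hyperbolicSplitting d v) (hyperbolicSplitting d w) =
      v.1.1 * w.1.2 - v.1.2 * w.1.1 + form d v.2 w.2 := by
  simp only [hyperbolicSplitting_apply, form_cons, Fin.sum_univ_succ, Fin.cons_zero, Fin.cons_succ]
  ring

/-- The automorphism `id × φ` of `ℤ^(d+2)` in the coordinates of `hyperbolicSplitting d`. -/
def stabilize (d : ℕ) :
    ((Fin d → ℤ) ≃ₗ[ℤ] (Fin d → ℤ)) →* ((Fin (d + 2) → ℤ) ≃ₗ[ℤ] (Fin (d + 2) → ℤ)) where
  toFun φ := (hyperbolicSplitting d).symm ≪≫ₗ (LinearEquiv.refl ℤ (ℤ × ℤ)).prodCongr φ ≪≫ₗ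
    hyperbolicSplitting d
  map_one' := by ext; simp
  map_mul' φ ψ := by ext; simp

lemma stabilize_hyperbolicSplitting {d : ℕ} (φ : (Fin d → ℤ) ≃ₗ[ℤ] (Fin d → ℤ))
    (w : (ℤ × ℤ) × (Fin d → ℤ)) :
    stabilize d φ (hyperbolicSplitting d w) = hyperbolicSplitting d (w.1, φ w.2) := by
  simp [stabilize]

lemma det_stabilize {d : ℕ} (φ : (Fin d → ℤ) ≃ₗ[ℤ] (Fin d → ℤ)) :
    LinearEquiv.det (stabilize d φ) = LinearEquiv.det φ := by
  ext
  rw [LinearEquiv.coe_det, LinearEquiv.coe_det]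
  change LinearMap.det ((hyperbolicSplitting d).toLinearMap ∘ₗ
    (LinearMap.id.prodMap φ.toLinearMap) ∘ₗ (hyperbolicSplitting d).symm.toLinearMap) = _
  rw [LinearMap.det_conj, LinearMap.det_prodMap, LinearMap.det_id, one_mul]

lemma stabilize_symplecticTransvection {d : ℕ} (x : Fin d → ℤ) (n : ℤ) :
    stabilize d (symplecticTransvection (isAlt_form d) x n) =
      symplecticTransvection (isAlt_form (d + 2)) (hyperbolicSplitting d (0, x)) n := by
  refine LinearEquiv.ext fun v => ?_
  obtain ⟨w, rfl⟩ := (hyperbolicSplitting d).surjective v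
  rw [stabilize_hyperbolicSplitting, symplecticTransvection_apply, symplecticTransvection_apply,
    form_hyperbolicSplitting, ← map_smul, ← map_add]
  congr 1
  ext <;> simp

lemma hyperbolicSplitting_left (d : ℕ) :
    hyperbolicSplitting d ((1, 0), 0) = Pi.single 0 1 - Pi.single 1 1 := by
  rw [hyperbolicSplitting_apply]
  ext i
  refine Fin.cases ?_ (Fin.cases ?_ fun i => ?_) i <;> simp [Fin.ext_iff]

lemma hyperbolicSplitting_right (d : ℕ) :
    hyperbolicSplitting d ((0, 1), 0) = Pi.single 0 1 := by
  rw [hyperbolicSplitting_apply]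
  ext i
  refine Fin.cases ?_ (Fin.cases ?_ fun i => ?_) i <;> simp

lemma hyperbolicSplitting_single {d : ℕ} (i : Fin d) :
    hyperbolicSplitting d (0, Pi.single i 1) =
      Pi.single 0 1 - Pi.single 1 1 + Pi.single i.succ.succ 1 := by
  rw [hyperbolicSplitting_apply]
  ext j
  refine Fin.cases ?_ (Fin.cases ?_ fun j => ?_) j <;>
    simp [Pi.single_apply, Fin.succ_succ_ne_one, (Fin.succ_succ_ne_one _).symm]

lemma transvection_hyperbolicSplitting_single_mem {d : ℕ} (i : Fin d) :
    symplecticTransvection (isAlt_form (d + 2)) (hyperbolicSplitting d (0, Pi.single i 1)) 2 ∈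
      rootSquareSubgroup (d + 2) := by
  rw [hyperbolicSplitting_single]
  exact transvection_single_sub_add_single_mem Fin.zero_lt_one
    (Fin.succ_lt_succ_iff.2 i.succ_pos)

lemma map_stabilize_rootSquareSubgroup_le (d : ℕ) :
    (rootSquareSubgroup d).map (stabilize d) ≤ rootSquareSubgroup (d + 2) := by
  rw [Subgroup.map_le_iff_le_comap, rootSquareSubgroup, Subgroup.closure_le]
  rintro _ ⟨_, ⟨i, rfl⟩ | ⟨⟨i, j⟩, rfl⟩, rfl⟩
  · rw [SetLike.mem_coe, Subgroup.mem_comap, stabilize_symplecticTransvection]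
    exact transvection_hyperbolicSplitting_single_mem i
  · have hsub : hyperbolicSplitting d (0, Pi.single i 1 - Pi.single j 1) =
        Pi.single i.succ.succ 1 - Pi.single j.succ.succ 1 := by
      rw [← sub_zero (0 : ℤ × ℤ), ← Prod.mk_sub_mk, map_sub, hyperbolicSplitting_single,
        hyperbolicSplitting_single, add_sub_add_left_eq_sub]
    rw [SetLike.mem_coe, Subgroup.mem_comap, stabilize_symplecticTransvection, hsub]
    exact transvection_single_sub_single_mem _ _

lemma eichler_hyperbolicSplitting_mem {d : ℕ} {h : ℤ × ℤ}
    (hh : symplecticTransvection (isAlt_form (d + 2)) (hyperbolicSplitting d (h, 0)) 2 ∈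
      rootSquareSubgroup (d + 2))
    (hroots : ∀ i, symplecticTransvection (isAlt_form (d + 2))
      (hyperbolicSplitting d (0, Pi.single i 1) - hyperbolicSplitting d (h, 0)) 2 ∈
        rootSquareSubgroup (d + 2)) (n : ℤ) (x : Fin d → ℤ) :
    eichler (isAlt_form (d + 2)) (hyperbolicSplitting d (h, 0)) (hyperbolicSplitting d (n • h, x))
      2 ∈ rootSquareSubgroup (d + 2) := by
  set q := hyperbolicSplitting d (h, 0) with hq
  set S := eichlerSubgroup (isAlt_form (d + 2)) q 2 _ (symplecticTransvection_mul_mem _ hh)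
  have hself : q ∈ S := ⟨isAlt_form _ _, by
    rw [eichler_self]; exact symplecticTransvection_mul_mem _ hh 2⟩
  have hsingle (i : Fin d) : hyperbolicSplitting d (0, Pi.single i 1) ∈ S := by
    have horth : form (d + 2) q (hyperbolicSplitting d (0, Pi.single i 1)) = 0 := by
      simp [hq, form_hyperbolicSplitting]
    have hmem := transvection_hyperbolicSplitting_single_mem i
    rw [← add_sub_cancel q (hyperbolicSplitting d (0, Pi.single i 1))] at hmem horth ⊢
    exact ⟨horth, eichler_self_add_mem _ hh (hroots i) hmem (by
      rwa [map_add, isAlt_form, zero_add] at horth)⟩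
  have hdecomp : hyperbolicSplitting d (n • h, x) =
      n • q + ∑ i, x i • hyperbolicSplitting d (0, Pi.single i 1) := by
    simp only [hq, ← map_smul, ← map_sum, ← map_add]
    congr 1
    ext <;> simp [Prod.fst_sum, Prod.snd_sum, Pi.single_apply]
  rw [hdecomp]
  exact (add_mem (zsmul_mem hself n) (sum_mem fun i _ => zsmul_mem (hsingle i) _)).2

lemma transvection_hyperbolicSplitting_left_mem (d : ℕ) :
    symplecticTransvection (isAlt_form (d + 2)) (hyperbolicSplitting d ((1, 0), 0)) 2 ∈
      rootSquareSubgroup (d + 2) := by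
  rw [hyperbolicSplitting_left]
  exact transvection_single_sub_single_mem _ _

lemma transvection_hyperbolicSplitting_right_mem (d : ℕ) :
    symplecticTransvection (isAlt_form (d + 2)) (hyperbolicSplitting d ((0, 1), 0)) 2 ∈
      rootSquareSubgroup (d + 2) := by
  rw [hyperbolicSplitting_right]
  exact transvection_single_mem _

lemma eichler_hyperbolicSplitting_left_mem {d : ℕ} {w : Fin (d + 2) → ℤ}
    (hw : form (d + 2) (hyperbolicSplitting d ((1, 0), 0)) w = 0) :
    eichler (isAlt_form (d + 2)) (hyperbolicSplitting d ((1, 0), 0)) w 2 ∈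
      rootSquareSubgroup (d + 2) := by
  obtain ⟨⟨⟨a, b⟩, x⟩, rfl⟩ := (hyperbolicSplitting d).surjective w
  obtain rfl : b = 0 := by simpa [form_hyperbolicSplitting] using hw
  have hroots (i : Fin d) : symplecticTransvection (isAlt_form (d + 2))
      (hyperbolicSplitting d (0, Pi.single i 1) - hyperbolicSplitting d ((1, 0), 0)) 2 ∈
        rootSquareSubgroup (d + 2) := by
    rw [hyperbolicSplitting_single, hyperbolicSplitting_left, add_sub_cancel_left]
    exact transvection_single_mem _
  simpa using
    eichler_hyperbolicSplitting_mem (transvection_hyperbolicSplitting_left_mem d) hroots a x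

lemma eichler_hyperbolicSplitting_right_mem {d : ℕ} {w : Fin (d + 2) → ℤ}
    (hw : form (d + 2) (hyperbolicSplitting d ((0, 1), 0)) w = 0) :
    eichler (isAlt_form (d + 2)) (hyperbolicSplitting d ((0, 1), 0)) w 2 ∈
      rootSquareSubgroup (d + 2) := by
  obtain ⟨⟨⟨a, b⟩, x⟩, rfl⟩ := (hyperbolicSplitting d).surjective w
  obtain rfl : a = 0 := by simpa [form_hyperbolicSplitting] using hw
  have hroots (i : Fin d) : symplecticTransvection (isAlt_form (d + 2))
      (hyperbolicSplitting d (0, Pi.single i 1) - hyperbolicSplitting d ((0, 1), 0)) 2 ∈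
        rootSquareSubgroup (d + 2) := by
    rw [hyperbolicSplitting_single, hyperbolicSplitting_right, add_sub_right_comm,
      sub_sub_cancel_left, neg_add_eq_sub]
    exact transvection_single_sub_single_mem _ _
  simpa using
    eichler_hyperbolicSplitting_mem (transvection_hyperbolicSplitting_right_mem d) hroots b x

lemma exists_mem_rootSquareSubgroup_fix {d : ℕ} {φ : (Fin (d + 2) → ℤ) ≃ₗ[ℤ] (Fin (d + 2) → ℤ)}
    (hφ : φ ∈ levelTwoSubgroup (d + 2)) :
    ∃ g ∈ rootSquareSubgroup (d + 2), ∀ h,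
      (g * φ) (hyperbolicSplitting d (h, 0)) = hyperbolicSplitting d (h, 0) := by
  set p := hyperbolicSplitting d ((1, 0), 0) with hp
  set q := hyperbolicSplitting d ((0, 1), 0) with hq
  have hle : rootSquareSubgroup (d + 2) ≤
      isometryGroup (form (d + 2)) ⊓ congruenceSubgroup ℤ (Fin (d + 2) → ℤ) 2 :=
    (rootSquareSubgroup_le_levelTwoSubgroup _).trans (inf_le_inf_right _ inf_le_left)
  have hpq : form (d + 2) p q = 1 := by simp [hp, hq, form_hyperbolicSplitting]
  have hsub : symplecticTransvection (isAlt_form (d + 2)) (q - p) 2 ∈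
      rootSquareSubgroup (d + 2) := by
    rw [hp, hq, hyperbolicSplitting_left, hyperbolicSplitting_right, sub_sub_cancel]
    exact transvection_single_mem _
  obtain ⟨g, hg, hgp, hgq⟩ := exists_mem_mul_apply_eq_self _ hle
    (transvection_hyperbolicSplitting_left_mem d) (transvection_hyperbolicSplitting_right_mem d)
    hsub (fun _ => eichler_hyperbolicSplitting_left_mem)
    (fun _ => eichler_hyperbolicSplitting_right_mem) hpq ⟨hφ.1.1, hφ.2⟩
  refine ⟨g, hg, fun ⟨a, b⟩ => ?_⟩
  have hab : hyperbolicSplitting d ((a, b), 0) = a • p + b • q := by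
    simp only [hp, hq, ← map_smul, ← map_add]
    simp
  rw [hab, map_add, map_smul, map_smul, hgp, hgq]

lemma apply_hyperbolicSplitting_zero {d : ℕ}
    {φ : (Fin (d + 2) → ℤ) ≃ₗ[ℤ] (Fin (d + 2) → ℤ)} (hφ : φ ∈ isometryGroup (form (d + 2)))
    (hfix : ∀ h, φ (hyperbolicSplitting d (h, 0)) = hyperbolicSplitting d (h, 0))
    (x : Fin d → ℤ) :
    φ (hyperbolicSplitting d (0, x)) = hyperbolicSplitting d
      (0, ((hyperbolicSplitting d).symm (φ (hyperbolicSplitting d (0, x)))).2) := by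
  obtain ⟨⟨⟨a, b⟩, y⟩, hy⟩ := (hyperbolicSplitting d).surjective (φ (hyperbolicSplitting d (0, x)))
  have horth (h : ℤ × ℤ) : form (d + 2) (hyperbolicSplitting d (h, 0))
      (φ (hyperbolicSplitting d (0, x))) = 0 := by
    rw [← hfix h, hφ, form_hyperbolicSplitting]
    simp
  simp only [← hy, form_hyperbolicSplitting] at horth
  obtain rfl : b = 0 := by simpa using horth (1, 0)
  obtain rfl : a = 0 := by simpa using horth (0, 1)
  rw [← hy, LinearEquiv.symm_apply_apply]
  rfl

lemma exists_apply_hyperbolicSplitting {d : ℕ}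
    {φ : (Fin (d + 2) → ℤ) ≃ₗ[ℤ] (Fin (d + 2) → ℤ)} (hφ : φ ∈ isometryGroup (form (d + 2)))
    (hfix : ∀ h, φ (hyperbolicSplitting d (h, 0)) = hyperbolicSplitting d (h, 0)) :
    ∃ ψ : (Fin d → ℤ) ≃ₗ[ℤ] (Fin d → ℤ),
      ∀ x, φ (hyperbolicSplitting d (0, x)) = hyperbolicSplitting d (0, ψ x) := by
  let restrict (φ : (Fin (d + 2) → ℤ) ≃ₗ[ℤ] (Fin (d + 2) → ℤ)) : (Fin d → ℤ) →ₗ[ℤ] (Fin d → ℤ) :=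
    LinearMap.snd ℤ _ _ ∘ₗ (hyperbolicSplitting d).symm.toLinearMap ∘ₗ φ.toLinearMap ∘ₗ
      (hyperbolicSplitting d).toLinearMap ∘ₗ LinearMap.inr ℤ _ _
  have hcomp {α β : (Fin (d + 2) → ℤ) ≃ₗ[ℤ] (Fin (d + 2) → ℤ)} (hαβ : α * β = 1)
      (hβ : ∀ x, β (hyperbolicSplitting d (0, x)) = hyperbolicSplitting d (0, restrict β x)) :
      restrict α ∘ₗ restrict β = LinearMap.id := by
    refine LinearMap.ext fun x => ?_
    change ((hyperbolicSplitting d).symm (α (hyperbolicSplitting d (0, restrict β x)))).2 = x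
    rw [← hβ, ← LinearEquiv.mul_apply, hαβ, LinearEquiv.coe_one, id,
      LinearEquiv.symm_apply_apply]
  have hfix_inv (h : ℤ × ℤ) :
      φ⁻¹ (hyperbolicSplitting d (h, 0)) = hyperbolicSplitting d (h, 0) := by
    rw [LinearEquiv.coe_inv, LinearEquiv.symm_apply_eq, hfix]
  have hrestrict := apply_hyperbolicSplitting_zero hφ hfix
  have hrestrict_inv := apply_hyperbolicSplitting_zero (inv_mem hφ) hfix_inv
  exact ⟨.ofLinearMap (restrict φ) (restrict φ⁻¹) (hcomp (mul_inv_cancel φ) hrestrict_inv)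
    (hcomp (inv_mul_cancel φ) hrestrict), hrestrict⟩

lemma exists_eq_stabilize {d : ℕ} {φ : (Fin (d + 2) → ℤ) ≃ₗ[ℤ] (Fin (d + 2) → ℤ)}
    (hφ : φ ∈ levelTwoSubgroup (d + 2))
    (hfix : ∀ h, φ (hyperbolicSplitting d (h, 0)) = hyperbolicSplitting d (h, 0)) :
    ∃ ψ ∈ levelTwoSubgroup d, stabilize d ψ = φ := by
  obtain ⟨⟨hiso, hdet⟩, hcong⟩ := hφ
  obtain ⟨ψ, hψ⟩ := exists_apply_hyperbolicSplitting hiso hfix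
  have hstab : stabilize d ψ = φ := by
    refine LinearEquiv.ext fun v => ?_
    obtain ⟨⟨h, x⟩, rfl⟩ := (hyperbolicSplitting d).surjective v
    have hadd (y : Fin d → ℤ) : hyperbolicSplitting d (h, y) =
        hyperbolicSplitting d (h, 0) + hyperbolicSplitting d (0, y) := by
      rw [← map_add, Prod.mk_add_mk, add_zero, zero_add]
    rw [stabilize_hyperbolicSplitting, hadd (ψ x), hadd x, map_add, hfix, hψ]
  refine ⟨ψ, ⟨⟨fun x y => ?_, ?_⟩, fun x => ?_⟩, hstab⟩
  · have h := hiso (hyperbolicSplitting d (0, x)) (hyperbolicSplitting d (0, y))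
    simpa [hψ, form_hyperbolicSplitting] using h
  · exact (det_stabilize ψ).symm.trans (hstab ▸ hdet)
  · obtain ⟨z, hz⟩ := hcong (hyperbolicSplitting d (0, x))
    refine ⟨((hyperbolicSplitting d).symm z).2, ?_⟩
    rw [hψ, ← (hyperbolicSplitting d).symm.injective.eq_iff, map_add, map_smul] at hz
    simpa using congrArg Prod.snd hz

lemma eq_one_of_det_eq_one {R : Type*} [CommRing R] {φ : (Fin 1 → R) ≃ₗ[R] (Fin 1 → R)}
    (hφ : LinearEquiv.det φ = 1) : φ = 1 := by
  have hentry : φ (Pi.single 0 1) 0 = 1 := by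
    simpa [← LinearMap.det_toMatrix', LinearMap.toMatrix'_apply] using congrArg Units.val hφ
  apply LinearEquiv.toLinearMap_injective
  ext i j
  rw [Subsingleton.elim i 0, Subsingleton.elim j 0]
  simpa using hentry

theorem levelTwoSubgroup_le_rootSquareSubgroup (d : ℕ) :
    levelTwoSubgroup d ≤ rootSquareSubgroup d := by
  induction d using Nat.twoStepInduction with
  | zero => exact fun φ _ => (Subsingleton.elim 1 φ) ▸ one_mem _
  | one => exact fun φ hφ => eq_one_of_det_eq_one hφ.1.2 ▸ one_mem _
  | more d ih _ =>
    intro φ hφ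
    obtain ⟨g, hg, hfix⟩ := exists_mem_rootSquareSubgroup_fix hφ
    obtain ⟨ψ, hψ, hψφ⟩ :=
      exists_eq_stabilize (mul_mem (rootSquareSubgroup_le_levelTwoSubgroup _ hg) hφ) hfix
    have hmem := map_stabilize_rootSquareSubgroup_le d (Subgroup.mem_map_of_mem _ (ih hψ))
    rwa [hψφ, Subgroup.mul_mem_cancel_left _ hg] at hmem

end LevelTwo

section RowAction

variable {n R : Type*} [Fintype n] [DecidableEq n] [CommRing R]

/-- The left action of invertible matrices on row vectors, `B` sending `x` to `x ᵥ* B⁻¹`. -/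
def rowAction : (Matrix n n R)ˣ →* ((n → R) ≃ₗ[R] (n → R)) where
  toFun B := .ofLinearMap (vecMulLinear ↑B⁻¹) (vecMulLinear ↑B)
    (LinearMap.ext fun x => by simp [vecMul_vecMul, -coe_units_inv])
    (LinearMap.ext fun x => by simp [vecMul_vecMul, -coe_units_inv])
  map_one' := by ext; simp
  map_mul' B C := LinearEquiv.ext fun x => by simp [vecMul_vecMul, -coe_units_inv]

lemma rowAction_inv_apply (B : (Matrix n n R)ˣ) (x : n → R) :
    rowAction B⁻¹ x = x ᵥ* (B : Matrix n n R) := rfl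

lemma rowAction_injective : Function.Injective (rowAction (n := n) (R := R)) := by
  refine (injective_iff_map_eq_one _).2 fun B hB => inv_eq_one.1 (Units.ext ?_)
  exact ext_iff_vecMul.2 fun x => (DFunLike.congr_fun hB x).trans (vecMul_one x).symm

lemma det_rowAction_inv (B : (Matrix n n R)ˣ) :
    (LinearEquiv.det (rowAction B⁻¹) : R) = (B : Matrix n n R).det := by
  rw [LinearEquiv.coe_det, ← det_transpose, ← LinearMap.det_toLin', toLin'_apply',
    mulVecLin_transpose]
  rfl

lemma rowAction_mem_det_ker_iff {B : (Matrix n n R)ˣ} :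
    rowAction B ∈ LinearEquiv.det.ker ↔ (B : Matrix n n R).det = 1 := by
  rw [← inv_mem_iff, ← map_inv, MonoidHom.mem_ker, ← det_rowAction_inv, Units.val_eq_one]

lemma rowAction_mem_isometryGroup_iff {Q : Matrix n n R} {B : (Matrix n n R)ˣ} :
    rowAction B ∈ isometryGroup (toLinearMap₂' R Q) ↔
      (B : Matrix n n R) * Q * (B : Matrix n n R)ᵀ = Q := by
  have hcongr (x y : n → R) : toLinearMap₂' R Q (rowAction B⁻¹ x) (rowAction B⁻¹ y) =
      toLinearMap₂' R ((B : Matrix n n R) * Q * (B : Matrix n n R)ᵀ) x y := by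
    rw [rowAction_inv_apply, rowAction_inv_apply, toLinearMap₂'_apply', toLinearMap₂'_apply',
      ← dotProduct_mulVec, ← mulVec_transpose _ y, mulVec_mulVec, mulVec_mulVec]
  rw [← inv_mem_iff, ← map_inv]
  simp only [mem_isometryGroup, hcongr]
  exact ⟨fun h => (toLinearMap₂' R).injective (LinearMap.ext₂ h), fun h x y => by rw [h]⟩

lemma rowAction_mem_congruenceSubgroup {m : ℕ} {B : (Matrix n n ℤ)ˣ}
    (hB : (B : Matrix n n ℤ).map (Int.cast : ℤ → ZMod m) = 1) :
    rowAction B ∈ congruenceSubgroup ℤ (n → ℤ) m := by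
  rw [← inv_mem_iff, ← map_inv]
  intro x
  have hdvd (i : n) : (m : ℤ) ∣ (x ᵥ* (B : Matrix n n ℤ)) i - x i := by
    have h := RingHom.map_vecMul (Int.castRingHom (ZMod m)) B.val x i
    rw [Int.coe_castRingHom, hB, vecMul_one] at h
    exact (ZMod.intCast_eq_intCast_iff_dvd_sub _ _ _).1 h.symm
  choose z hz using hdvd
  exact ⟨z, funext fun i => by
    rw [rowAction_inv_apply, Pi.add_apply, Pi.smul_apply, smul_eq_mul, ← hz, add_sub_cancel]⟩

end RowAction

section Generators

lemma vecMul_L {d : ℕ} (p : Fin d) (x : Fin d → ℤ) :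
    x ᵥ* L d p = symplecticTransvection (isAlt_form d) (Pi.single p 1) 1 x := by
  rw [symplecticTransvection_apply, form_apply, single_one_dotProduct]
  ext q
  obtain rfl | hqp := eq_or_ne q p
  · simp only [vecMul, mulVec, dotProduct, L, Omega, of_apply, if_true, Pi.add_apply, Pi.smul_apply,
      Pi.single_eq_same, smul_eq_mul, one_mul, mul_one]
    rw [← Fintype.sum_ite_eq q x, ← Finset.sum_add_distrib]
    refine Finset.sum_congr rfl fun r _ => ?_
    rcases lt_trichotomy r q with h | rfl | h <;> simp [*, not_lt_of_gt, ne_of_gt, ne_of_lt]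
  · simp [vecMul, dotProduct, L, hqp]

lemma det_L {d : ℕ} (p : Fin d) : (L d p).det = 1 := by
  have hlin : (L d p).vecMulLinear =
      (symplecticTransvection (isAlt_form d) (Pi.single p 1) 1).toLinearMap :=
    LinearMap.ext (vecMul_L p)
  rw [← det_transpose, ← LinearMap.det_toLin', toLin'_apply', mulVecLin_transpose, hlin,
    ← LinearEquiv.coe_det, det_symplecticTransvection, Units.val_one]

lemma rowAction_eq_of_coe_eq_L {d : ℕ} {p : Fin d} {u : (Matrix (Fin d) (Fin d) ℤ)ˣ}
    (hu : (u : Matrix (Fin d) (Fin d) ℤ) = L d p) :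
    rowAction u = (symplecticTransvection (isAlt_form d) (Pi.single p 1) 1)⁻¹ := by
  rw [eq_inv_iff_mul_eq_one, ← inv_inv u, map_inv, inv_mul_eq_one]
  exact LinearEquiv.ext fun x => by rw [rowAction_inv_apply, hu, vecMul_L]

lemma exists_mem_Gd_coe_eq_L {d : ℕ} (p : Fin d) :
    ∃ u ∈ Gd d, (u : Matrix (Fin d) (Fin d) ℤ) = L d p :=
  have hdet : IsUnit (L d p).det := by rw [det_L]; exact isUnit_one
  ⟨nonsingInvUnit (L d p) hdet, Subgroup.subset_closure ⟨p, rfl⟩, rfl⟩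

lemma rootSquareSubgroup_le_map_Gd (d : ℕ) : rootSquareSubgroup d ≤ (Gd d).map rowAction := by
  have hsingle (i : Fin d) (k : ℤ) :
      symplecticTransvection (isAlt_form d) (Pi.single i 1) k ∈ (Gd d).map rowAction := by
    obtain ⟨u, hu, huL⟩ := exists_mem_Gd_coe_eq_L i
    have hmem := inv_mem (Subgroup.mem_map_of_mem rowAction hu)
    rw [rowAction_eq_of_coe_eq_L huL, inv_inv] at hmem
    simpa using symplecticTransvection_mul_mem _ hmem k
  rw [rootSquareSubgroup, Subgroup.closure_le]
  rintro _ ⟨_, ⟨i, rfl⟩ | ⟨⟨i, j⟩, rfl⟩, rfl⟩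
  · exact hsingle i 2
  change symplecticTransvection _ (Pi.single i 1 - Pi.single j 1) 2 ∈ _
  obtain rfl | hij := eq_or_ne i j
  · rw [sub_self, symplecticTransvection_zero_left]
    exact one_mem _
  have hconj : symplecticTransvection (isAlt_form d) (Pi.single j 1) (Omega d i j)
      (Pi.single i 1) = Pi.single i 1 - Pi.single j 1 := by
    rw [symplecticTransvection_apply, form_single_single]
    rcases hij.lt_or_gt with h | h <;> simp [Omega, h, h.not_gt, sub_eq_add_neg]
  rw [← hconj, ← conj_symplecticTransvection _ (symplecticTransvection_mem_isometryGroup _ _ _)]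
  exact mul_mem (mul_mem (hsingle j _) (hsingle i 2)) (inv_mem (hsingle j _))

end Generators

section InducedPermutations

variable {α : Type*}

/-- The permutations of `s` that are restrictions of elements of `H`. -/
def inducedPerms (H : Subgroup (Equiv.Perm α)) (s : Set α) : Subgroup (Equiv.Perm s) where
  carrier := {σ | ∃ g ∈ H, ∀ v : s, g v = σ v}
  one_mem' := ⟨1, one_mem H, fun _ => rfl⟩
  mul_mem' := fun ⟨g, hg, hgσ⟩ ⟨h, hh, hhτ⟩ => ⟨g * h, mul_mem hg hh, fun v => by
    rw [Equiv.Perm.mul_apply, hhτ, hgσ, Equiv.Perm.mul_apply]⟩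
  inv_mem' := fun {σ} ⟨g, hg, hgσ⟩ => ⟨g⁻¹, inv_mem hg, fun v => by
    rw [Equiv.Perm.inv_eq_iff_eq, hgσ]
    exact congrArg Subtype.val (σ.apply_symm_apply v).symm⟩

lemma eq_top_of_forall_swap_mem [Finite α] [DecidableEq α] {H : Subgroup (Equiv.Perm α)} (a : α)
    (h : ∀ b, Equiv.swap a b ∈ H) : H = ⊤ := by
  rw [eq_top_iff, ← Equiv.Perm.closure_isSwap, Subgroup.closure_le]
  rintro _ ⟨b, c, -, rfl⟩
  exact SubmonoidClass.swap_mem_trans H (Equiv.swap_comm a b ▸ h b) (h c)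

open scoped Pointwise in
lemma mem_stabilizer_of_forall_apply_eq {g : Equiv.Perm α} {s : Set α} {σ : Equiv.Perm s}
    (h : ∀ v : s, g v = σ v) : g ∈ MulAction.stabilizer (Equiv.Perm α) s := by
  rw [MulAction.mem_stabilizer_iff]
  calc g '' s = Set.range fun v : s => (σ v : α) := by simp_rw [Set.image_eq_range, h]
    _ = s := (σ.surjective.range_comp Subtype.val).trans Subtype.range_coe

end InducedPermutations

section Reduction

/-- The action of the reductions modulo two on column vectors. -/
def reduction (d : ℕ) : (Matrix (Fin d) (Fin d) ℤ)ˣ →* Equiv.Perm (Fin d → ZMod 2) :=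
  (MulAction.toPermHom (Module.End (ZMod 2) (Fin d → ZMod 2))ˣ _).comp <|
    (Units.map (toLinAlgEquiv' : _ ≃ₐ[ZMod 2] _).toMonoidHom).comp <|
      Units.map (Int.castRingHom (ZMod 2)).mapMatrix.toMonoidHom

lemma reduction_apply {d : ℕ} (B : (Matrix (Fin d) (Fin d) ℤ)ˣ) (v : Fin d → ZMod 2) :
    reduction d B v =
      (B : Matrix (Fin d) (Fin d) ℤ).map (Int.cast : ℤ → ZMod 2) *ᵥ v := rfl

/-- The vector `ē*` as an element of `E`. -/
def starVector (d : ℕ) : Eset d := ⟨_, Set.mem_insert _ _⟩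

/-- The vector `ē_p` as an element of `E`. -/
def basisVector {d : ℕ} (p : Fin d) : Eset d := ⟨_, Set.mem_insert_of_mem _ ⟨p, rfl⟩⟩

lemma map_L_mulVec_single {d : ℕ} (p q : Fin d) :
    (L d p).map (Int.cast : ℤ → ZMod 2) *ᵥ Pi.single q 1 =
      if q = p then fun _ => 1 else Pi.single q 1 := by
  rw [mulVec_single_one]
  ext r
  split_ifs with h
  · simp [L, h, apply_ite (Int.cast : ℤ → ZMod 2)]
  · simp [L, h, Pi.single_apply]

lemma map_L_mulVec_one {d : ℕ} (p : Fin d) :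
    (L d p).map (Int.cast : ℤ → ZMod 2) *ᵥ (fun _ => 1) = Pi.single p 1 := by
  have hsum : (fun _ => 1 : Fin d → ZMod 2) = ∑ q, Pi.single q 1 :=
    (Finset.univ_sum_single _).symm
  have hterm (q : Fin d) : (L d p).map (Int.cast : ℤ → ZMod 2) *ᵥ Pi.single q 1 =
      Pi.single q 1 + if q = p then (fun _ => 1) - Pi.single p 1 else 0 := by
    rw [map_L_mulVec_single]
    split_ifs with h <;> simp [h]
  calc (L d p).map (Int.cast : ℤ → ZMod 2) *ᵥ (fun _ => 1)
      = ∑ q, (L d p).map (Int.cast : ℤ → ZMod 2) *ᵥ Pi.single q 1 := by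
        rw [hsum, mulVec_sum]
    _ = (fun _ => 1) + ((fun _ => 1) - Pi.single p 1) := by
        rw [Finset.sum_congr rfl fun q _ => hterm q, Finset.sum_add_distrib, ← hsum,
          Finset.sum_ite_eq' Finset.univ p fun _ => _, if_pos (Finset.mem_univ p)]
    _ = Pi.single p 1 := by
        ext r
        rw [Pi.add_apply, Pi.sub_apply, CharTwo.sub_eq_add, ← add_assoc, CharTwo.add_self_eq_zero,
          zero_add]

lemma reduction_apply_of_coe_eq_L {d : ℕ} {p : Fin d} {u : (Matrix (Fin d) (Fin d) ℤ)ˣ}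
    (hu : (u : Matrix (Fin d) (Fin d) ℤ) = L d p) (v : Eset d) :
    reduction d u v = Equiv.swap (starVector d) (basisVector p) v := by
  rw [reduction_apply, hu]
  obtain ⟨_, rfl | ⟨q, rfl⟩⟩ := v
  · rw [map_L_mulVec_one]
    exact congrArg Subtype.val (Equiv.swap_apply_left (starVector d) (basisVector p)).symm
  obtain rfl | hqp := eq_or_ne q p
  · rw [map_L_mulVec_single, if_pos rfl]
    exact congrArg Subtype.val (Equiv.swap_apply_right (starVector d) (basisVector q)).symm
  have hne {w : Eset d} (hw : w.1 p = 1) : basisVector q ≠ w := by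
    rintro rfl
    simp [basisVector, hqp] at hw
  rw [map_L_mulVec_single, if_neg hqp]
  exact congrArg Subtype.val
    (Equiv.swap_apply_of_ne_of_ne (hne rfl) (hne (Pi.single_eq_same p 1))).symm

lemma inducedPerms_map_Gd (d : ℕ) : inducedPerms ((Gd d).map (reduction d)) (Eset d) = ⊤ := by
  refine eq_top_of_forall_swap_mem (starVector d) ?_
  rintro ⟨_, rfl | ⟨p, rfl⟩⟩
  · exact Equiv.swap_self (starVector d) ▸ one_mem _
  · obtain ⟨u, hu, huL⟩ := exists_mem_Gd_coe_eq_L p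
    exact ⟨_, Subgroup.mem_map_of_mem _ hu, reduction_apply_of_coe_eq_L huL⟩

lemma map_intCast_eq_one_of_reduction {d : ℕ} {B : (Matrix (Fin d) (Fin d) ℤ)ˣ}
    (hB : ∀ v ∈ Eset d, reduction d B v = v) :
    (B : Matrix (Fin d) (Fin d) ℤ).map (Int.cast : ℤ → ZMod 2) = 1 :=
  ext_of_mulVec_single fun p => (hB _ (basisVector p).2).trans (one_mulVec _).symm

end Reduction

section ArithmeticDescription

open scoped Pointwise in
/-- The matrices of determinant one preserving `Ω` whose reductions modulo two preserve `E`. -/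
noncomputable def arithmeticSubgroup (d : ℕ) : Subgroup (Matrix (Fin d) (Fin d) ℤ)ˣ :=
  (LinearEquiv.det.ker ⊓ isometryGroup (form d)).comap rowAction ⊓
    (MulAction.stabilizer (Equiv.Perm (Fin d → ZMod 2)) (Eset d)).comap (reduction d)

lemma mem_arithmeticSubgroup_iff {d : ℕ} {B : (Matrix (Fin d) (Fin d) ℤ)ˣ} :
    B ∈ arithmeticSubgroup d ↔
      ((B : Matrix (Fin d) (Fin d) ℤ).det = 1 ∧
        (B : Matrix (Fin d) (Fin d) ℤ) * Omega d * (B : Matrix (Fin d) (Fin d) ℤ)ᵀ = Omega d) ∧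
        (fun v => ((B : Matrix (Fin d) (Fin d) ℤ).map (Int.cast : ℤ → ZMod 2)).mulVec v) ''
          Eset d = Eset d :=
  and_congr (and_congr rowAction_mem_det_ker_iff rowAction_mem_isometryGroup_iff) Iff.rfl

lemma Gd_le_arithmeticSubgroup (d : ℕ) : Gd d ≤ arithmeticSubgroup d := by
  refine (Subgroup.closure_le _).2 ?_
  rintro u ⟨p, hu⟩
  refine ⟨?_, mem_stabilizer_of_forall_apply_eq (reduction_apply_of_coe_eq_L hu)⟩
  change rowAction u ∈ LinearEquiv.det.ker ⊓ isometryGroup (form d)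
  rw [rowAction_eq_of_coe_eq_L hu]
  exact inv_mem ⟨det_symplecticTransvection _ _ _, symplecticTransvection_mem_isometryGroup _ _ _⟩

open scoped Pointwise in
lemma exists_mem_Gd_reduction_eq {d : ℕ} {B : (Matrix (Fin d) (Fin d) ℤ)ˣ}
    (hB : B ∈ arithmeticSubgroup d) :
    ∃ g ∈ Gd d, ∀ v ∈ Eset d, reduction d g v = reduction d B v := by
  have hE : reduction d B • Eset d = Eset d := hB.2
  have hmem (v : Fin d → ZMod 2) : reduction d B v ∈ Eset d ↔ v ∈ Eset d := by
    conv_lhs => rw [← hE]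
    exact Set.smul_mem_smul_set_iff
  obtain ⟨_, ⟨g, hg, rfl⟩, hgB⟩ : (reduction d B).subtypePerm hmem ∈
      inducedPerms ((Gd d).map (reduction d)) (Eset d) :=
    inducedPerms_map_Gd d ▸ Subgroup.mem_top _
  exact ⟨g, hg, fun v hv => hgB ⟨v, hv⟩⟩

lemma mem_Gd_of_map_intCast_eq_one {d : ℕ} {B : (Matrix (Fin d) (Fin d) ℤ)ˣ}
    (hB : B ∈ arithmeticSubgroup d)
    (hB₂ : (B : Matrix (Fin d) (Fin d) ℤ).map (Int.cast : ℤ → ZMod 2) = 1) : B ∈ Gd d := by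
  have hlevel : rowAction B ∈ levelTwoSubgroup d :=
    ⟨⟨hB.1.2, hB.1.1⟩, rowAction_mem_congruenceSubgroup hB₂⟩
  rw [← Subgroup.mem_map_iff_mem rowAction_injective]
  exact rootSquareSubgroup_le_map_Gd d (levelTwoSubgroup_le_rootSquareSubgroup d hlevel)

theorem Gd_eq_arithmeticSubgroup (d : ℕ) : Gd d = arithmeticSubgroup d := by
  refine le_antisymm (Gd_le_arithmeticSubgroup d) fun B hB => ?_
  obtain ⟨g, hg, hgB⟩ := exists_mem_Gd_reduction_eq hB
  have hfix (v) (hv : v ∈ Eset d) : reduction d (g⁻¹ * B) v = v := by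
    rw [map_mul, map_inv, Equiv.Perm.mul_apply, Equiv.Perm.inv_eq_iff_eq, hgB v hv]
  have hmem : g⁻¹ * B ∈ Gd d :=
    mem_Gd_of_map_intCast_eq_one (mul_mem (inv_mem (Gd_le_arithmeticSubgroup d hg)) hB)
      (map_intCast_eq_one_of_reduction hfix)
  simpa using mul_mem hg hmem

end ArithmeticDescription

end RauzyVeech

/-- The hyperelliptic Rauzy–Veech group `G_d` equals the group of all
`B ∈ SL(ℤ^{A_d})` with `B Ω Bᵀ = Ω` whose mod-2 reduction preserves the set
`E = {ē*} ∪ {ē_p}`. -/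
theorem Gd_eq (d : ℕ) (hd : 2 ≤ d) :
    ((Gd d : Subgroup (Matrix (Fin d) (Fin d) ℤ)ˣ) : Set (Matrix (Fin d) (Fin d) ℤ)ˣ) =
      {B : (Matrix (Fin d) (Fin d) ℤ)ˣ |
        (B : Matrix (Fin d) (Fin d) ℤ).det = 1 ∧
        (B : Matrix (Fin d) (Fin d) ℤ) * Omega d * (B : Matrix (Fin d) (Fin d) ℤ)ᵀ = Omega d ∧
        (fun v => ((B : Matrix (Fin d) (Fin d) ℤ).map (Int.cast : ℤ → ZMod 2)).mulVec v) ''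
            Eset d = Eset d} := by
  ext B
  rw [SetLike.mem_coe, RauzyVeech.Gd_eq_arithmeticSubgroup, RauzyVeech.mem_arithmeticSubgroup_iff,
    Set.mem_ofPred_eq, and_assoc]
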